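/- Let r ≥ 3 and let G be a {C_{1r}, C*}-free linear r-graph containing an edge e = {u_1,...,u_r} with d(u_1), d(u_2) ≥ (r-1)^2 + 1 and d(u_i) ≥ (r-1)^2 for 3 ≤ i ≤ r. Let S be the union of all edges intersecting e. Then |S| = (r-1)^3 + r, every vertex of S has degree at most (r-1)^2 + 1, and the number of edges intersecting S is at most r(r-1)^2 + 1. -/

import Mathlib

open Finset

/-- A linear `r`-uniform hypergraph: every edge has `r` vertices and
any two distinct edges intersect in at most one vertex. -/
def IsLinear {V : Type*} [DecidableEq V] (r : ℕ) (E : Finset (Finset V)) : Prop :=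
  (∀ e ∈ E, e.card = r) ∧ ∀ e ∈ E, ∀ f ∈ E, e ≠ f → (e ∩ f).card ≤ 1

/-- The degree of a vertex: the number of edges containing it. -/
def degree {V : Type*} [DecidableEq V] (E : Finset (Finset V)) (v : V) : ℕ :=
  (E.filter (fun e => v ∈ e)).card

/-- `E` contains a copy of the `r`-crown `C_{1r}`: `r` pairwise disjoint edges
together with one edge meeting each of them in exactly one vertex. -/
def HasCrown {V : Type*} [DecidableEq V] (r : ℕ) (E : Finset (Finset V)) : Prop :=
  ∃ e ∈ E, ∃ f : Fin r → Finset V,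
    (∀ i, f i ∈ E) ∧ (∀ i, f i ≠ e) ∧
    (∀ i j, i ≠ j → f i ∩ f j = ∅) ∧
    (∀ i, (e ∩ f i).card = 1)

/-- `E` contains a copy of `C*`: `r-2` edges pairwise meeting exactly in a common
vertex `v`, two further edges disjoint from each other and from all the others,
and one edge meeting each of the `r` edges in exactly one vertex, avoiding `v`. -/
def HasCStar {V : Type*} [DecidableEq V] (r : ℕ) (E : Finset (Finset V)) : Prop :=
  ∃ v : V, ∃ e ∈ E, ∃ f : Fin r → Finset V,
    (∀ i, f i ∈ E) ∧ (∀ i, f i ≠ e) ∧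
    (∀ i : Fin r, (i : ℕ) < r - 2 → v ∈ f i) ∧
    (∀ i j : Fin r, (i : ℕ) < r - 2 → (j : ℕ) < r - 2 → i ≠ j → f i ∩ f j = {v}) ∧
    (∀ i j : Fin r, r - 2 ≤ (i : ℕ) → i ≠ j → f i ∩ f j = ∅) ∧
    (∀ i, (e ∩ f i).card = 1) ∧ v ∉ e

namespace LinearHypergraph

variable {V : Type*} [DecidableEq V] {r : ℕ} {E : Finset (Finset V)} {e : Finset V}

theorem eq_of_two_mem (hE : IsLinear r E) {f g : Finset V} (hf : f ∈ E) (hg : g ∈ E)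
    {x y : V} (hxy : x ≠ y) (hxf : x ∈ f) (hyf : y ∈ f) (hxg : x ∈ g) (hyg : y ∈ g) :
    f = g := by
  by_contra hne
  have h2 : ({x, y} : Finset V) ⊆ f ∩ g := by
    intro z hz
    simp only [mem_insert, mem_singleton] at hz
    rcases hz with rfl | rfl <;> simp [*]
  have h3 := card_le_card h2
  rw [card_pair hxy] at h3
  have := hE.2 f hf g hg hne
  omega

/-- The edges through `v` other than `e`. -/
def otherEdges (E : Finset (Finset V)) (e : Finset V) (v : V) : Finset (Finset V) :=
  (E.filter (fun f => v ∈ f)).erase e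

theorem mem_otherEdges {v : V} {f : Finset V} :
    f ∈ otherEdges E e v ↔ f ≠ e ∧ f ∈ E ∧ v ∈ f := by
  simp [otherEdges]

theorem card_otherEdges (he : e ∈ E) {v : V} (hv : v ∈ e) :
    (otherEdges E e v).card + 1 = degree E v := by
  rw [otherEdges, degree]
  exact card_erase_add_one (by simp [he, hv])

/-- The vertices other than `v` on the edges through `v` other than `e`. -/
def neighbors (E : Finset (Finset V)) (e : Finset V) (v : V) : Finset V :=
  (otherEdges E e v).biUnion (fun f => f.erase v)

theorem mem_neighbors {v x : V} :
    x ∈ neighbors E e v ↔ ∃ f ∈ otherEdges E e v, x ≠ v ∧ x ∈ f := by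
  simp [neighbors]

theorem card_neighbors (hE : IsLinear r E) (v : V) :
    (neighbors E e v).card = (otherEdges E e v).card * (r - 1) := by
  rw [neighbors, card_biUnion]
  · apply sum_const_nat
    intro f hf
    rw [mem_otherEdges] at hf
    rw [card_erase_of_mem hf.2.2, hE.1 f hf.2.1]
  · intro f hf g hg hne
    rw [mem_coe, mem_otherEdges] at hf hg
    rw [Function.onFun, disjoint_left]
    intro x hx hx'
    rw [mem_erase] at hx hx'
    exact hne (eq_of_two_mem hE hf.2.1 hg.2.1 hx.1 hx.2 hf.2.2 hx'.2 hg.2.2)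

theorem mem_unique (hE : IsLinear r E) (he : e ∈ E) {v w : V} (hv : v ∈ e) (hw : w ∈ e)
    {f : Finset V} (hf : f ∈ otherEdges E e v) (hwf : w ∈ f) : w = v := by
  rw [mem_otherEdges] at hf
  by_contra hne
  exact hf.1 (eq_of_two_mem hE hf.2.1 he hne hwf hf.2.2 hw hv)

theorem inter_otherEdges (hE : IsLinear r E) (he : e ∈ E) {v : V} (hv : v ∈ e)
    {f : Finset V} (hf : f ∈ otherEdges E e v) : e ∩ f = {v} := by
  ext w
  rw [mem_inter, mem_singleton]
  constructor
  · rintro ⟨h1, h2⟩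
    exact mem_unique hE he hv h1 hf h2
  · rintro rfl
    exact ⟨hv, (mem_otherEdges.1 hf).2.2⟩

/-- A set of vertices avoiding `v` meets at most as many edges through `v` as it has elements. -/
theorem card_le_of_hits (hE : IsLinear r E) {v : V} {X : Finset V} (hv : v ∉ X)
    (hX : ∀ f ∈ otherEdges E e v, ∃ x ∈ X, x ∈ f) : (otherEdges E e v).card ≤ X.card := by
  refine card_le_card_of_forall_subsingleton (fun f x => x ∈ f) hX ?_
  rintro x hx f ⟨hf, hxf⟩ g ⟨hg, hxg⟩
  rw [mem_otherEdges] at hf hg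
  exact eq_of_two_mem hE hf.2.1 hg.2.1 (ne_of_mem_of_not_mem hx hv) hxf hf.2.2 hxg hg.2.2

theorem exists_disjoint_of_card_lt (hE : IsLinear r E) {v : V} {X : Finset V} (hv : v ∉ X)
    (hX : X.card < (otherEdges E e v).card) : ∃ f ∈ otherEdges E e v, Disjoint f X := by
  by_contra! h
  have := card_le_of_hits hE hv (fun f hf => by
    obtain ⟨x, h1, h2⟩ := not_disjoint_iff.1 (h f hf)
    exact ⟨x, h2, h1⟩)
  omega

theorem disjoint_of_disjoint_erase (hE : IsLinear r E) (he : e ∈ E) {v w : V} (hv : v ∈ e)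
    (hw : w ∈ e) (hvw : v ≠ w) {f g : Finset V} (hf : f ∈ otherEdges E e v)
    (h : Disjoint f (g.erase w)) : Disjoint f g := by
  rw [disjoint_left] at h ⊢
  intro x hxf hxg
  refine h hxf (mem_erase.2 ⟨?_, hxg⟩)
  rintro rfl
  exact hvw (mem_unique hE he hv hw hf hxf).symm

/-- Greedy choice of pairwise disjoint edges through prescribed vertices of `e`, avoiding `X`. -/
theorem exists_disjoint_edges (hE : IsLinear r E) (he : e ∈ E) {ι : Type*} [DecidableEq ι]
    {u : ι → V} (hinj : Function.Injective u) (hmem : ∀ i, u i ∈ e) (I : Finset ι) :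
    ∀ X : Finset V, (∀ i, u i ∉ X) →
      (∀ i ∈ I, X.card + (r - 1) * I.card < (otherEdges E e (u i)).card + (r - 1)) →
      ∃ f : ι → Finset V, (∀ i ∈ I, f i ∈ otherEdges E e (u i)) ∧
        (∀ i ∈ I, Disjoint (f i) X) ∧ ∀ i ∈ I, ∀ j ∈ I, i ≠ j → Disjoint (f i) (f j) := by
  induction I using Finset.induction_on with
  | empty => intro X _ _; exact ⟨fun _ => ∅, by simp⟩
  | insert a I ha ih =>
    intro X hX hcard
    simp only [card_insert_of_notMem ha, mul_add, mul_one] at hcard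
    obtain ⟨h, hh, hhX⟩ := exists_disjoint_of_card_lt (e := e) hE (hX a) (by
      have := hcard a (mem_insert_self a I)
      generalize (r - 1) * I.card = t at this
      omega)
    have hh' := mem_otherEdges.1 hh
    obtain ⟨f, hf1, hf2, hf3⟩ := ih (X ∪ h.erase (u a)) (by
        intro i hi
        rw [mem_union, mem_erase] at hi
        rcases hi with hi | hi
        · exact hX i hi
        · exact hi.1 (mem_unique hE he (hmem a) (hmem i) hh hi.2)) (by
        intro i hi
        have h1 := hcard i (mem_insert_of_mem hi)
        have h2 := card_union_le X (h.erase (u a))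
        rw [card_erase_of_mem hh'.2.2, hE.1 h hh'.2.1] at h2
        generalize (r - 1) * I.card = t at *
        omega)
    have hd : ∀ i ∈ I, Disjoint (f i) h := fun i hi =>
      disjoint_of_disjoint_erase hE he (hmem i) (hmem a)
        (fun hc => ha (hinj hc ▸ hi)) (hf1 i hi) (disjoint_union_right.1 (hf2 i hi)).2
    have hne : ∀ i ∈ I, i ≠ a := fun i hi hc => ha (hc ▸ hi)
    refine ⟨Function.update f a h, ?_, ?_, ?_⟩
    · intro i hi
      rcases mem_insert.1 hi with rfl | hi
      · simpa using hh
      · rw [Function.update_of_ne (hne i hi)]; exact hf1 i hi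
    · intro i hi
      rcases mem_insert.1 hi with rfl | hi
      · simpa using hhX
      · rw [Function.update_of_ne (hne i hi)]; exact (disjoint_union_right.1 (hf2 i hi)).1
    · intro i hi j hj hij
      rcases mem_insert.1 hi with rfl | hi' <;> rcases mem_insert.1 hj with rfl | hj'
      · exact absurd rfl hij
      · rw [Function.update_self, Function.update_of_ne (hne j hj')]; exact (hd j hj').symm
      · rw [Function.update_self, Function.update_of_ne (hne i hi')]; exact hd i hi'
      · rw [Function.update_of_ne (hne i hi'), Function.update_of_ne (hne j hj')]
        exact hf3 i hi' j hj' hij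

section Crown

variable {u : Fin r → V} (hE : IsLinear r E) (hfree : ¬ HasCrown r E) (he : e ∈ E)
  (hinj : Function.Injective u) (hmem : ∀ i, u i ∈ e)

include hE hfree he hinj hmem

/-- In a crown-free graph, pairwise disjoint edges through all vertices of `e` but `u l` meet
every edge through `u l`. If there are many such edges, then they are met exactly once each. -/
theorem matching_hits {l : Fin r} (hl : (r - 1) ^ 2 ≤ (otherEdges E e (u l)).card)
    {f : Fin r → Finset V} (hf : ∀ i, i ≠ l → f i ∈ otherEdges E e (u i))
    (hdisj : ∀ i j, i ≠ l → j ≠ l → i ≠ j → Disjoint (f i) (f j)) :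
    (otherEdges E e (u l)).card = (r - 1) ^ 2 ∧
    (∀ i, i ≠ l → (f i).erase (u i) ⊆ neighbors E e (u l)) ∧
    ∀ i j, i ≠ l → j ≠ l → i ≠ j → ∀ h ∈ otherEdges E e (u l),
      Disjoint h (f i) ∨ Disjoint h (f j) := by
  set X : Finset V := (univ.erase l).biUnion (fun i => (f i).erase (u i)) with hXdef
  have hXmem : ∀ x, x ∈ X ↔ ∃ i, i ≠ l ∧ x ≠ u i ∧ x ∈ f i := by
    intro x; simp [hXdef]
  have hXu : ∀ i, u i ∉ X := by
    intro i hi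
    obtain ⟨j, hj, hne, hx⟩ := (hXmem _).1 hi
    exact hne (mem_unique hE he (hmem j) (hmem i) (hf j hj) hx)
  have hXcard : X.card ≤ (r - 1) ^ 2 := by
    have h1 : X.card ≤ (univ.erase l).card * (r - 1) := by
      apply card_biUnion_le_card_mul
      intro i hi
      have := mem_otherEdges.1 (hf i (ne_of_mem_erase hi))
      rw [card_erase_of_mem this.2.2, hE.1 _ this.2.1]
    rw [card_erase_of_mem (mem_univ l), card_univ, Fintype.card_fin] at h1
    rwa [sq]
  have hhit : ∀ h ∈ otherEdges E e (u l), ∃ x ∈ X, x ∈ h := by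
    intro h hh
    by_contra! hcon
    have hd : ∀ i, i ≠ l → Disjoint h (f i) := by
      intro i hi
      refine disjoint_of_disjoint_erase hE he (hmem l) (hmem i)
        (fun hc => hi (hinj hc).symm) hh ?_
      rw [disjoint_left]
      intro x hxh hxf
      exact hcon x ((hXmem x).2 ⟨i, hi, mem_erase.1 hxf⟩) hxh
    have hup : ∀ i, Function.update f l h i ∈ otherEdges E e (u i) := by
      intro i
      by_cases hi : i = l
      · subst hi; simpa using hh
      · rw [Function.update_of_ne hi]; exact hf i hi
    refine hfree ⟨e, he, Function.update f l h, fun i => (mem_otherEdges.1 (hup i)).2.1,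
      fun i => (mem_otherEdges.1 (hup i)).1, ?_, ?_⟩
    · intro i j hij
      rw [← disjoint_iff_inter_eq_empty]
      by_cases hi : i = l
      · subst hi
        rw [Function.update_self, Function.update_of_ne hij.symm]
        exact hd j hij.symm
      · rw [Function.update_of_ne hi]
        by_cases hj : j = l
        · subst hj
          rw [Function.update_self]
          exact (hd i hi).symm
        · rw [Function.update_of_ne hj]
          exact hdisj i j hi hj hij
    · intro i
      rw [inter_otherEdges hE he (hmem i) (hup i), card_singleton]
  have hcard := card_le_of_hits hE (hXu l) hhit
  refine ⟨by omega, ?_, ?_⟩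
  · have hsub : X ⊆ neighbors E e (u l) := by
      have h1 := card_le_of_hits (e := e) hE (X := X ∩ neighbors E e (u l))
        (fun hc => hXu l (mem_inter.1 hc).1) (by
          intro h hh
          obtain ⟨x, hx, hxh⟩ := hhit h hh
          exact ⟨x, mem_inter.2 ⟨hx, mem_neighbors.2
            ⟨h, hh, ne_of_mem_of_not_mem hx (hXu l), hxh⟩⟩, hxh⟩)
      have h2 : X ∩ neighbors E e (u l) = X :=
        eq_of_subset_of_card_le inter_subset_left (by omega)
      exact inter_eq_left.1 h2
    intro i hi x hx
    exact hsub ((hXmem x).2 ⟨i, hi, mem_erase.1 hx⟩)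
  · intro i j hi hj hij h hh
    by_contra! hcon
    obtain ⟨x, hxh, hxi⟩ := not_disjoint_iff.1 hcon.1
    obtain ⟨y, hyh, hyj⟩ := not_disjoint_iff.1 hcon.2
    have hne : ∀ m, m ≠ l → u m ∉ h := fun m hm hc =>
      hm (hinj (mem_unique hE he (hmem l) (hmem m) hh hc))
    have hxX : x ∈ X := (hXmem x).2 ⟨i, hi, ne_of_mem_of_not_mem hxh (hne i hi), hxi⟩
    have hyX : y ∈ X := (hXmem y).2 ⟨j, hj, ne_of_mem_of_not_mem hyh (hne j hj), hyj⟩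
    have hxy : x ≠ y := by
      rintro rfl
      exact disjoint_left.1 (hdisj i j hi hj hij) hxi hyj
    have h1 := card_le_of_hits (e := e) hE (X := X.erase x)
      (fun hc => hXu l (mem_erase.1 hc).2) (by
        intro g hg
        obtain ⟨z, hz, hzg⟩ := hhit g hg
        by_cases hzx : z = x
        · subst hzx
          have hg' := mem_otherEdges.1 hg
          have hh' := mem_otherEdges.1 hh
          have : g = h := eq_of_two_mem hE hg'.2.1 hh'.2.1
            (ne_of_mem_of_not_mem hz (hXu l)) hzg hg'.2.2 hxh hh'.2.2
          exact ⟨y, mem_erase.2 ⟨hxy.symm, hyX⟩, this ▸ hyh⟩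
        · exact ⟨z, mem_erase.2 ⟨hzx, hz⟩, hzg⟩)
    have h2 := card_erase_lt_of_mem hxX
    omega

/-- All edges meeting `e` lie in the union of `e` and the neighbourhood of a vertex of `e` of
large degree. -/
theorem neighbors_subset (hr : 3 ≤ r)
    (hd : ∀ i, (r - 1) ^ 2 ≤ (otherEdges E e (u i)).card + 1)
    {l : Fin r} (hl : (r - 1) ^ 2 ≤ (otherEdges E e (u l)).card) (j : Fin r) :
    neighbors E e (u j) ⊆ neighbors E e (u l) := by
  by_cases hjl : j = l
  · rw [hjl]
  intro x hx
  obtain ⟨f₀, hf₀, hxne, hxf⟩ := mem_neighbors.1 hx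
  have hf₀' := mem_otherEdges.1 hf₀
  have hI : ((univ.erase l).erase j).card = r - 2 := by
    rw [card_erase_of_mem (by simp [hjl]), card_erase_of_mem (mem_univ l), card_univ,
      Fintype.card_fin]
    omega
  obtain ⟨f, hf1, hf2, hf3⟩ := exists_disjoint_edges hE he hinj hmem
    ((univ.erase l).erase j) (f₀.erase (u j)) (by
      intro i hi
      rw [mem_erase] at hi
      exact hi.1 (mem_unique hE he (hmem j) (hmem i) hf₀ hi.2)) (by
      intro i _
      rw [card_erase_of_mem hf₀'.2.2, hE.1 _ hf₀'.2.1, hI]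
      have := hd i
      obtain ⟨k, rfl⟩ : ∃ k, r = k + 3 := ⟨r - 3, by omega⟩
      simp only [show k + 3 - 1 = k + 2 by omega, show k + 3 - 2 = k + 1 by omega] at *
      nlinarith)
  have hmemI : ∀ i, i ≠ l → i ≠ j → i ∈ (univ.erase l).erase j := by
    intro i h1 h2; simp [h1, h2]
  have hd0 : ∀ i, i ≠ l → i ≠ j → Disjoint (f i) f₀ := fun i h1 h2 =>
    disjoint_of_disjoint_erase hE he (hmem i) (hmem j) (fun hc => h2 (hinj hc))
      (hf1 i (hmemI i h1 h2)) (hf2 i (hmemI i h1 h2))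
  have key := matching_hits hE hfree he hinj hmem hl (f := Function.update f j f₀) (by
      intro i hi
      by_cases hij : i = j
      · subst hij; simpa using hf₀
      · rw [Function.update_of_ne hij]; exact hf1 i (hmemI i hi hij)) (by
      intro i i' hi hi' hne
      by_cases hij : i = j
      · subst hij
        rw [Function.update_self, Function.update_of_ne hne.symm]
        exact (hd0 i' hi' hne.symm).symm
      · rw [Function.update_of_ne hij]
        by_cases hij' : i' = j
        · subst hij'
          rw [Function.update_self]
          exact hd0 i hi hij
        · rw [Function.update_of_ne hij']
          exact hf3 i (hmemI i hi hij) i' (hmemI i' hi' hij') hne)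
  have := key.2.1 j hjl
  rw [Function.update_self] at this
  exact this (mem_erase.2 ⟨hxne, hxf⟩)

theorem card_otherEdges_eq (hr : 3 ≤ r)
    (hd : ∀ i, (r - 1) ^ 2 ≤ (otherEdges E e (u i)).card + 1)
    {l : Fin r} (hl : (r - 1) ^ 2 ≤ (otherEdges E e (u l)).card) :
    (otherEdges E e (u l)).card = (r - 1) ^ 2 := by
  have hI : (univ.erase l).card = r - 1 := by
    rw [card_erase_of_mem (mem_univ l), card_univ, Fintype.card_fin]
  obtain ⟨f, hf1, hf2, hf3⟩ := exists_disjoint_edges hE he hinj hmem (univ.erase l) ∅ (by simp)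
    (by
      intro i _
      rw [card_empty, hI]
      have := hd i
      rw [sq] at this
      omega)
  exact (matching_hits hE hfree he hinj hmem hl (fun i hi => hf1 i (by simp [hi]))
    (fun i j hi hj => hf3 i (by simp [hi]) j (by simp [hj]))).1

theorem card_sdiff_neighbors_le (hr : 3 ≤ r)
    (hd : ∀ i, (r - 1) ^ 2 ≤ (otherEdges E e (u i)).card + 1)
    {l : Fin r} (hl : (r - 1) ^ 2 ≤ (otherEdges E e (u l)).card) (i : Fin r) :
    (neighbors E e (u l) \ neighbors E e (u i)).card ≤ r - 1 := by
  rw [card_sdiff_of_subset (neighbors_subset hE hfree he hinj hmem hr hd hl i),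
    card_neighbors hE, card_neighbors hE, card_otherEdges_eq hE hfree he hinj hmem hr hd hl]
  have := Nat.mul_le_mul_right (r - 1) (hd i)
  rw [add_mul, one_mul] at this
  omega

theorem exists_common_neighbor (hr : 3 ≤ r)
    (hd : ∀ i, (r - 1) ^ 2 ≤ (otherEdges E e (u i)).card + 1)
    {l : Fin r} (hl : (r - 1) ^ 2 ≤ (otherEdges E e (u l)).card) :
    ∃ v, ∀ i, v ∈ neighbors E e (u i) := by
  by_contra! hcon
  have hsub : neighbors E e (u l) ⊆
      (univ.erase l).biUnion (fun i => neighbors E e (u l) \ neighbors E e (u i)) := by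
    intro x hx
    obtain ⟨i, hi⟩ := hcon x
    have hil : i ≠ l := by rintro rfl; exact hi hx
    simp only [mem_biUnion, mem_erase, mem_univ, mem_sdiff]
    exact ⟨i, ⟨hil, trivial⟩, hx, hi⟩
  have h1 := (card_le_card hsub).trans (card_biUnion_le_card_mul _ _ (r - 1) fun i _ =>
    card_sdiff_neighbors_le hE hfree he hinj hmem hr hd hl i)
  rw [card_erase_of_mem (mem_univ l), card_univ, Fintype.card_fin, card_neighbors hE,
    card_otherEdges_eq hE hfree he hinj hmem hr hd hl] at h1
  obtain ⟨k, rfl⟩ : ∃ k, r = k + 3 := ⟨r - 3, by omega⟩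
  simp only [show k + 3 - 1 = k + 2 by omega] at h1
  nlinarith [sq_nonneg (k + 2)]

theorem hasCStar_of_four_le (hr : 4 ≤ r)
    (hd : ∀ i, (r - 1) ^ 2 ≤ (otherEdges E e (u i)).card + 1)
    (hd₀ : (r - 1) ^ 2 ≤ (otherEdges E e (u ⟨0, by omega⟩)).card)
    (hd₁ : (r - 1) ^ 2 ≤ (otherEdges E e (u ⟨1, by omega⟩)).card) : HasCStar r E := by
  obtain ⟨v, hv⟩ := exists_common_neighbor hE hfree he hinj hmem (by omega) hd hd₀
  simp only [mem_neighbors] at hv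
  choose F hF hvu hvF using hv
  set l : Fin r := ⟨0, by omega⟩
  set m : Fin r := ⟨1, by omega⟩
  have hlm : l ≠ m := by simp [l, m]
  have hve : v ∉ e := fun hc => hvu l (mem_unique hE he (hmem l) hc (hF l) (hvF l))
  set J : Finset (Fin r) := (univ.erase l).erase m with hJ
  have hJcard : J.card = r - 2 := by
    rw [hJ, card_erase_of_mem (by simp [hlm.symm]), card_erase_of_mem (mem_univ l), card_univ,
      Fintype.card_fin]
    omega
  set X : Finset V := insert v (J.biUnion fun i => ((F i).erase (u i)).erase v) with hX
  have hXmem : ∀ i ∈ J, (F i).erase (u i) ⊆ X := by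
    intro i hi x hx
    by_cases hxv : x = v
    · simp [hX, hxv]
    · exact mem_insert_of_mem (mem_biUnion.2 ⟨i, hi, mem_erase.2 ⟨hxv, hx⟩⟩)
  have hXu : ∀ i, u i ∉ X := by
    intro i hi
    rcases mem_insert.1 hi with hi | hi
    · exact hve (hi ▸ hmem i)
    · obtain ⟨j, _, hx⟩ := mem_biUnion.1 hi
      rw [mem_erase, mem_erase] at hx
      exact hx.2.1 (mem_unique hE he (hmem j) (hmem i) (hF j) hx.2.2)
  have hXcard : X.card ≤ (r - 2) * (r - 2) + 1 := by
    refine (card_insert_le _ _).trans (Nat.add_le_add_right ?_ 1)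
    rw [← hJcard]
    apply card_biUnion_le_card_mul
    intro i _
    have := mem_otherEdges.1 (hF i)
    rw [card_erase_of_mem (mem_erase.2 ⟨hvu i, hvF i⟩), card_erase_of_mem this.2.2,
      hE.1 _ this.2.1, hJcard]
    omega
  obtain ⟨f, hf1, hf2, hf3⟩ := exists_disjoint_edges hE he hinj hmem {l, m} X hXu (by
    intro i hi
    have hdi : (r - 1) ^ 2 ≤ (otherEdges E e (u i)).card := by
      rcases mem_insert.1 hi with rfl | hi
      · exact hd₀
      · rw [mem_singleton.1 hi]; exact hd₁
    rw [card_pair hlm]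
    obtain ⟨k, rfl⟩ : ∃ k, r = k + 4 := ⟨r - 4, by omega⟩
    simp only [show k + 4 - 1 = k + 3 by omega, show k + 4 - 2 = k + 2 by omega] at *
    nlinarith)
  have hcross : ∀ i ∈ ({l, m} : Finset (Fin r)), ∀ j ∈ J, Disjoint (f i) (F j) := by
    intro i hi j hj
    refine disjoint_of_disjoint_erase hE he (hmem i) (hmem j) ?_ (hf1 i hi)
      ((hf2 i hi).mono_right (hXmem j hj))
    intro hc
    rw [hinj hc] at hi
    simp only [hJ, mem_erase] at hj
    simp [hj.1, hj.2.1] at hi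
  have hFF : ∀ i j, i ≠ j → F i ∩ F j = {v} := by
    intro i j hij
    have hi := mem_otherEdges.1 (hF i)
    have hj := mem_otherEdges.1 (hF j)
    refine (eq_of_subset_of_card_le (by simp [hvF]) ?_).symm
    rw [card_singleton]
    refine hE.2 _ hi.2.1 _ hj.2.1 fun hc => hij (hinj ?_)
    exact mem_unique hE he (hmem j) (hmem i) (hF j) (hc ▸ hi.2.2)
  let G : Fin r → Finset V := fun i => if i ∈ J then F i else f i
  have hGF : ∀ i ∈ J, G i = F i := fun i hi => if_pos hi
  have hGf : ∀ i, i ∉ J → G i = f i := fun i hi => if_neg hi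
  have hJc : ∀ i, i ∉ J → i ∈ ({l, m} : Finset (Fin r)) := by
    intro i hi
    simp only [hJ, mem_erase, mem_univ, and_true] at hi
    simp only [mem_insert, mem_singleton]
    tauto
  have hG : ∀ i, G i ∈ otherEdges E e (u i) := by
    intro i
    by_cases hi : i ∈ J
    · rw [hGF i hi]; exact hF i
    · rw [hGf i hi]; exact hf1 i (hJc i hi)
  let σ : Fin r → Fin r := fun i => ⟨if (i : ℕ) < r - 2 then i + 2 else i - (r - 2), by
    split_ifs <;> omega⟩
  have hσinj : Function.Injective σ := by
    intro i j hij
    simp only [σ, Fin.mk.injEq] at hij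
    ext
    split_ifs at hij <;> omega
  have hσJ : ∀ i : Fin r, σ i ∈ J ↔ (i : ℕ) < r - 2 := by
    intro i
    have hl : (l : ℕ) = 0 := rfl
    have hm : (m : ℕ) = 1 := rfl
    simp only [hJ, mem_erase, mem_univ, and_true, ne_eq, σ, Fin.ext_iff, hl, hm]
    grind
  refine ⟨v, e, he, G ∘ σ, fun i => (mem_otherEdges.1 (hG _)).2.1,
    fun i => (mem_otherEdges.1 (hG _)).1, ?_, ?_, ?_, ?_, hve⟩
  · intro i hi
    rw [Function.comp_apply, hGF _ ((hσJ i).2 hi)]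
    exact hvF _
  · intro i j hi hj hij
    rw [Function.comp_apply, Function.comp_apply, hGF _ ((hσJ i).2 hi), hGF _ ((hσJ j).2 hj)]
    exact hFF _ _ (hσinj.ne hij)
  · intro i j hi hij
    have hi' : σ i ∉ J := fun hc => absurd ((hσJ i).1 hc) (by omega)
    rw [Function.comp_apply, Function.comp_apply, hGf _ hi', ← disjoint_iff_inter_eq_empty]
    by_cases hj : σ j ∈ J
    · rw [hGF _ hj]
      exact hcross _ (hJc _ hi') _ hj
    · rw [hGf _ hj]
      exact hf3 _ (hJc _ hi') _ (hJc _ hj) (hσinj.ne hij)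
  · intro i
    rw [Function.comp_apply, inter_otherEdges hE he (hmem _) (hG _), card_singleton]

end Crown

theorem hasCrown_three (hE : IsLinear 3 E) {p q s : V} (h : {p, q, s} ∈ E)
    {f₁ f₂ f₃ : Finset V} (h₁ : f₁ ∈ E) (h₂ : f₂ ∈ E) (h₃ : f₃ ∈ E) (hp : p ∈ f₁) (hq : q ∈ f₂)
    (hs : s ∈ f₃) (h₁₂ : Disjoint f₁ f₂) (h₁₃ : Disjoint f₁ f₃) (h₂₃ : Disjoint f₂ f₃) :
    HasCrown 3 E := by
  have hne : ∀ i : Fin 3, ![f₁, f₂, f₃] i ≠ {p, q, s} := by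
    rw [disjoint_left] at h₁₂ h₂₃
    intro i
    fin_cases i
    · exact fun hc => h₁₂ (show q ∈ f₁ by rw [show f₁ = _ from hc]; simp) hq
    · exact fun hc => h₂₃ (show s ∈ f₂ by rw [show f₂ = _ from hc]; simp) hs
    · exact fun hc => h₂₃ hq (show q ∈ f₃ by rw [show f₃ = _ from hc]; simp)
  have hmem : ∀ i : Fin 3, ![f₁, f₂, f₃] i ∈ E := by
    intro i; fin_cases i <;> assumption
  refine ⟨{p, q, s}, h, ![f₁, f₂, f₃], hmem, hne, ?_, ?_⟩
  · intro i j hij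
    rw [← disjoint_iff_inter_eq_empty]
    fin_cases i <;> fin_cases j <;>
      first
      | exact absurd rfl hij
      | assumption
      | (apply Disjoint.symm; assumption)
  · intro i
    refine le_antisymm (hE.2 _ h _ (hmem i) (hne i).symm) (card_pos.2 ?_)
    fin_cases i
    · exact ⟨p, by simp [hp]⟩
    · exact ⟨q, by simp [hq]⟩
    · exact ⟨s, by simp [hs]⟩

/-- The configuration of two `2 × 2` grids `p 3, …, p 6` and `p 7, …, p 10`, whose rows are the
edges through `p 0`, whose columns are the edges through `p 1`, and whose diagonals with at most one
exception are the edges through `p 2`. -/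
theorem false_of_grids (hE : IsLinear 3 E) (hfree : ¬ HasCrown 3 E) {p : Fin 11 → V}
    (hp : Function.Injective p)
    (ha₁ : {p 0, p 3, p 4} ∈ E) (ha₂ : {p 0, p 5, p 6} ∈ E) (ha₃ : {p 0, p 7, p 8} ∈ E)
    (ha₄ : {p 0, p 9, p 10} ∈ E) (hb₁ : {p 1, p 3, p 5} ∈ E) (hb₂ : {p 1, p 4, p 6} ∈ E)
    (hb₃ : {p 1, p 7, p 9} ∈ E) (hb₄ : {p 1, p 8, p 10} ∈ E)
    (hc₁ : {p 2, p 3, p 6} ∉ E → {p 2, p 4, p 5} ∈ E)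
    (hc₂ : {p 2, p 7, p 10} ∉ E → {p 2, p 3, p 6} ∈ E ∧ {p 2, p 8, p 9} ∈ E)
    (hc₃ : {p 2, p 8, p 9} ∉ E → {p 2, p 3, p 6} ∈ E ∧ {p 2, p 7, p 10} ∈ E)
    {g : Finset V} (hg : g ∈ E) (h0 : p 0 ∉ g) (h1 : p 1 ∉ g) (h2 : p 2 ∉ g) (h3 : p 3 ∈ g) :
    False := by
  have hcol : ∀ {i j k : Fin 11}, {p i, p j, p k} ∈ E → p i ∉ g → j ≠ k → p j ∈ g → p k ∉ g := by
    intro i j k h hi hjk hj hk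
    have := eq_of_two_mem hE hg h (fun hc => hjk (hp hc)) hj hk (by simp) (by simp)
    exact hi (by rw [this]; simp)
  have hdisj : ∀ {i j k : Fin 11}, p i ∉ g → p j ∉ g → p k ∉ g → Disjoint {p i, p j, p k} g := by
    intro i j k hi hj hk
    simp [hi, hj, hk]
  have himage : ∀ {i j k i' j' k' : Fin 11},
      Disjoint ({i, j, k} : Finset (Fin 11)) {i', j', k'} →
        Disjoint ({p i, p j, p k} : Finset V) {p i', p j', p k'} := by
    intro i j k i' j' k' h
    simpa only [image_insert, image_singleton] using (disjoint_image hp).2 h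
  have h4 : p 4 ∉ g := hcol ha₁ h0 (by decide) h3
  have h5 : p 5 ∉ g := hcol hb₁ h1 (by decide) h3
  by_cases h6 : p 6 ∈ g
  · have hc : {p 2, p 4, p 5} ∈ E := hc₁ fun h => hcol h h2 (by decide) h3 h6
    have hrow : ∀ w w' : Fin 11, {p 0, p w, p w'} ∈ E →
        Disjoint ({0, w, w'} : Finset (Fin 11)) {2, 4, 5} →
        p w ∈ g ∨ p w' ∈ g := by
      intro w w' hw hne
      by_contra! hcon
      refine hfree (hasCrown_three hE ha₁ hw hg hc (by simp) h3 (by simp)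
        (hdisj h0 hcon.1 hcon.2) (himage hne) (hdisj h2 h4 h5).symm)
    have hcard : ∀ w w' : Fin 11, w ∉ ({3, 6} : Finset (Fin 11)) →
        w' ∉ ({3, 6, w} : Finset (Fin 11)) → p w ∈ g → p w' ∉ g := by
      intro w w' hw hw' hwg hwg'
      have h := card_le_card (s := ({3, 6, w, w'} : Finset (Fin 11)).image p) (t := g) (by
        intro t ht
        simp only [image_insert, image_singleton, mem_insert, mem_singleton] at ht
        rcases ht with rfl | rfl | rfl | rfl <;> assumption)
      rw [card_image_of_injective _ hp, hE.1 g hg] at h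
      have hfour : ∀ w w' : Fin 11, w ∉ ({3, 6} : Finset (Fin 11)) →
          w' ∉ ({3, 6, w} : Finset (Fin 11)) → ({3, 6, w, w'} : Finset (Fin 11)).card = 4 := by
        decide
      have := hfour w w' hw hw'
      omega
    rcases hrow 7 8 ha₃ (by decide) with h | h <;> rcases hrow 9 10 ha₄ (by decide) with h' | h' <;>
      exact hcard _ _ (by decide) (by decide) h h'
  · have hrow : ∀ w w' : Fin 11, {p 0, p w, p w'} ∈ E →
        Disjoint ({0, w, w'} : Finset (Fin 11)) {1, 4, 6} →
        p w ∈ g ∨ p w' ∈ g := by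
      intro w w' hw hne
      by_contra! hcon
      refine hfree (hasCrown_three hE ha₁ hw hg hb₂ (by simp) h3 (by simp)
        (hdisj h0 hcon.1 hcon.2) (himage hne) (hdisj h1 h4 h6).symm)
    have hcross : ∀ w w' : Fin 11, {p 2, p w, p w'} ∈ E → {p 2, p 3, p 6} ∈ E →
        Disjoint ({2, w, w'} : Finset (Fin 11)) {0, 5, 6} →
        p w ∉ g → p w' ∉ g → False := by
      intro w w' hw hx hne hwg hwg'
      refine hfree (hasCrown_three hE hx hw hg ha₂ (by simp) h3 (by simp)
        (hdisj h2 hwg hwg') (himage hne) (hdisj h0 h5 h6).symm)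
    rcases hrow 7 8 ha₃ (by decide) with h | h <;> rcases hrow 9 10 ha₄ (by decide) with hw | hw
    · exact hcol hb₃ h1 (by decide) h hw
    · obtain ⟨hx, hz⟩ := hc₂ fun hc => hcol hc h2 (by decide) h hw
      exact hcross 8 9 hz hx (by decide) (hcol ha₃ h0 (by decide) h)
        (hcol hb₃ h1 (by decide) h)
    · obtain ⟨hx, hz⟩ := hc₃ fun hc => hcol hc h2 (by decide) h hw
      exact hcross 7 10 hz hx (by decide) (fun h7 => hcol ha₃ h0 (by decide) h7 h)
        (hcol hb₄ h1 (by decide) h)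
    · exact hcol hb₄ h1 (by decide) h hw

/-- Let `α` and `β` describe the edges through `a` and `b`, both covering an eight-element set
`W`, and suppose that the edges through `c` are `{c, y, α (β y)}` for `y` in all but at most two
elements of `W`. Then every edge meeting `W` contains `a`, `b` or `c`. -/
theorem false_of_matchings (hE : IsLinear 3 E) (hfree : ¬ HasCrown 3 E) {a b c : V}
    (hab : a ≠ b) (hac : a ≠ c) (hbc : b ≠ c) {W D : Finset V} (haW : a ∉ W) (hbW : b ∉ W)
    (hcW : c ∉ W) (hW : W.card = 8) (hD : (W \ D).card ≤ 2) {α β : V → V}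
    (hα : ∀ x ∈ W, α x ∈ W ∧ α x ≠ x ∧ {a, x, α x} ∈ E)
    (hβ : ∀ x ∈ W, β x ∈ W ∧ β x ≠ x ∧ {b, x, β x} ∈ E)
    (hγ : ∀ x ∈ W, x ∈ D → {c, x, α (β x)} ∈ E ∧ α (β x) = β (α x))
    {g : Finset V} (hg : g ∈ E) (hag : a ∉ g) (hbg : b ∉ g) (hcg : c ∉ g) {x₀ : V}
    (hx₀ : x₀ ∈ W) (hx₀g : x₀ ∈ g) : False := by
  have hαα : ∀ x ∈ W, α (α x) = x := by
    intro x hx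
    obtain ⟨h1, h2, h3⟩ := hα x hx
    obtain ⟨h4, h5, h6⟩ := hα _ h1
    have := eq_of_two_mem hE h3 h6 (x := a) (y := α x) (by grind) (by simp) (by simp) (by simp)
      (by simp)
    have : x ∈ ({a, α x, α (α x)} : Finset V) := by rw [← this]; simp
    grind
  have hββ : ∀ x ∈ W, β (β x) = x := by
    intro x hx
    obtain ⟨h1, h2, h3⟩ := hβ x hx
    obtain ⟨h4, h5, h6⟩ := hβ _ h1
    have := eq_of_two_mem hE h3 h6 (x := b) (y := β x) (by grind) (by simp) (by simp) (by simp)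
      (by simp)
    have : x ∈ ({b, β x, β (β x)} : Finset V) := by rw [← this]; simp
    grind
  have hαβ : ∀ x ∈ W, α x ≠ β x := by
    intro x hx hc
    obtain ⟨h1, h2, h3⟩ := hα x hx
    obtain ⟨h4, h5, h6⟩ := hβ x hx
    have := eq_of_two_mem hE h3 h6 (x := x) (y := α x) h2.symm (by simp) (by simp) (by simp)
      (by simp [hc])
    have : a ∈ ({b, x, β x} : Finset V) := by rw [← this]; simp
    grind
  have hcomm : ∀ x ∈ W, α (β x) = β (α x) := by
    intro x hx
    by_contra hc
    have hsub : ({x, α x, β x} : Finset V) ⊆ W \ D := by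
      intro y hy
      have hyW : y ∈ W := by grind
      refine mem_sdiff.2 ⟨hyW, fun hyD => hc ?_⟩
      have := (hγ y hyW hyD).2
      grind
    have h1 := card_le_card hsub
    rw [card_eq_three.2 ⟨x, α x, β x, by grind, by grind, by grind, rfl⟩] at h1
    omega
  have hδne : ∀ x ∈ W, α (β x) ≠ x := by
    intro x hx
    have := hαβ x hx
    have := hαα _ (hβ x hx).1
    grind
  have hdiag : ∀ x ∈ W, ∀ y ∈ W, y ≠ x → y ≠ α (β x) → {c, x, α (β x)} ∉ E →
      {c, y, α (β y)} ∈ E := by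
    intro x hx y hy hyx hyδ hxE
    by_contra hyE
    have hδW := (hα _ (hβ x hx).1).1
    have hδδ : α (β (α (β x))) = x := by
      rw [hcomm x hx, hββ _ (hα x hx).1, hαα x hx]
    have hsub : ({x, α (β x), y} : Finset V) ⊆ W \ D := by
      intro t ht
      simp only [mem_insert, mem_singleton] at ht
      rw [mem_sdiff]
      rcases ht with rfl | rfl | rfl
      · exact ⟨hx, fun h => hxE (hγ _ hx h).1⟩
      · refine ⟨hδW, fun h => hxE ?_⟩
        have := (hγ _ hδW h).1
        rwa [hδδ, pair_comm] at this
      · exact ⟨hy, fun h => hyE (hγ _ hy h).1⟩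
    have h3 := card_le_card hsub
    rw [card_eq_three.2 ⟨x, α (β x), y, (hδne x hx).symm, hyx.symm, hyδ.symm, rfl⟩] at h3
    omega
  obtain ⟨z, hz, hzx⟩ : ∃ z ∈ W, z ∉ ({x₀, α x₀, β x₀, α (β x₀)} : Finset V) := by
    apply exists_mem_notMem_of_card_lt_card
    have : ({x₀, α x₀, β x₀, α (β x₀)} : Finset V).card ≤ 4 := card_le_four
    omega
  have horb : ∀ x ∈ W, α x ∈ W ∧ β x ∈ W ∧ α (β x) ∈ W ∧ α (α x) = x ∧ β (β x) = x ∧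
      α (α (β x)) = β x ∧ β (α x) = α (β x) ∧ β (α (β x)) = α x ∧
      x ≠ α x ∧ x ≠ β x ∧ x ≠ α (β x) ∧ α x ≠ β x ∧ α x ≠ α (β x) ∧ β x ≠ α (β x) := by
    intro x hx
    have h1 := hα x hx
    have h2 := hβ x hx
    have h3 := hα _ h2.1
    have h4 := hαα x hx
    have h5 := hαα _ h2.1
    have h6 := hββ x hx
    have h7 := hββ _ h1.1
    have h8 := hcomm x hx
    have h9 := hδne x hx
    have h10 := hαβ x hx
    have h11 := h1.2.1
    have h12 := h2.2.1
    have h13 := h3.2.1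
    refine ⟨h1.1, h2.1, h3.1, h4, h6, h5, h8.symm, by rw [h8, h7], h11.symm, h12.symm, h9.symm,
      h10, fun h => ?_, h13.symm⟩
    have := congrArg α h
    rw [h4, h5] at this
    exact h12 this.symm
  have hox := horb x₀ hx₀
  have hoz := horb z hz
  have hinj : Function.Injective ![a, b, c, x₀, α x₀, β x₀, α (β x₀), z, α z, β z, α (β z)] := by
    have hO : ∀ t ∈ ({x₀, α x₀, β x₀, α (β x₀)} : Finset V),
        α t ∈ ({x₀, α x₀, β x₀, α (β x₀)} : Finset V) ∧
          β t ∈ ({x₀, α x₀, β x₀, α (β x₀)} : Finset V) := by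
      intro t ht
      simp only [mem_insert, mem_singleton] at ht
      rcases ht with rfl | rfl | rfl | rfl <;> simp [hox]
    have o₁ : α z ∉ ({x₀, α x₀, β x₀, α (β x₀)} : Finset V) := fun h =>
      hzx (hoz.2.2.2.1 ▸ (hO _ h).1)
    have o₂ : β z ∉ ({x₀, α x₀, β x₀, α (β x₀)} : Finset V) := fun h =>
      hzx (hoz.2.2.2.2.1 ▸ (hO _ h).2)
    have o₃ : α (β z) ∉ ({x₀, α x₀, β x₀, α (β x₀)} : Finset V) := fun h =>
      o₂ (hoz.2.2.2.2.2.1 ▸ (hO _ h).1)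
    clear hO hdiag hcomm hδne hαα hββ hαβ hα hβ hγ horb
    simp only [mem_insert, mem_singleton, not_or] at hzx o₁ o₂ o₃
    rw [← List.nodup_ofFn]
    simp only [List.ofFn_succ, List.ofFn_zero, List.nodup_cons, List.mem_cons, List.not_mem_nil,
      Matrix.cons_val_zero, Matrix.cons_val_succ, or_false, not_or]
    split_ands <;> grind only [List.nodup_nil]
  have e₁ := (hα x₀ hx₀).2.2
  have e₂ := (hα _ hox.2.1).2.2
  have e₃ := (hα z hz).2.2
  have e₄ := (hα _ hoz.2.1).2.2
  have e₅ := (hβ x₀ hx₀).2.2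
  have e₆ := (hβ _ hox.1).2.2
  have e₇ := (hβ z hz).2.2
  have e₈ := (hβ _ hoz.1).2.2
  rw [← hcomm x₀ hx₀] at e₆
  rw [← hcomm z hz] at e₈
  refine false_of_grids hE hfree hinj e₁ e₂ e₃ e₄ e₅ e₆ e₇ e₈ ?_ ?_ ?_ hg hag hbg hcg hx₀g
  · intro h
    have := hdiag x₀ hx₀ (α x₀) hox.1 (by grind only) (by grind only) h
    rwa [hox.2.2.2.2.2.2.1, hox.2.2.2.2.2.1] at this
  · intro h
    refine ⟨hdiag z hz x₀ hx₀ ?_ ?_ h, ?_⟩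
    · exact fun hc => absurd (hinj (a₁ := 3) (a₂ := 7) hc) (by decide)
    · exact fun hc => absurd (hinj (a₁ := 3) (a₂ := 10) hc) (by decide)
    · have := hdiag z hz (α z) hoz.1 (by grind only) (by grind only) h
      rwa [hoz.2.2.2.2.2.2.1, hoz.2.2.2.2.2.1] at this
  · intro h
    have hδ : α (β (α z)) = β z := by rw [hoz.2.2.2.2.2.2.1, hoz.2.2.2.2.2.1]
    have h' : {c, α z, α (β (α z))} ∉ E := by rwa [hδ]
    refine ⟨hdiag _ hoz.1 x₀ hx₀ ?_ ?_ h', hdiag _ hoz.1 z hz ?_ ?_ h'⟩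
    · exact fun hc => absurd (hinj (a₁ := 3) (a₂ := 8) hc) (by decide)
    · rw [hδ]
      exact fun hc => absurd (hinj (a₁ := 3) (a₂ := 9) hc) (by decide)
    · grind only
    · rw [hδ]
      grind only

theorem exists_eq_of_mem (hE : IsLinear r E) (he : e ∈ E) {u : Fin r → V}
    (hinj : Function.Injective u) (hmem : ∀ i, u i ∈ e) {x : V} (hx : x ∈ e) : ∃ i, u i = x := by
  have h : univ.image u = e := by
    refine eq_of_subset_of_card_le (by simpa [image_subset_iff] using hmem) ?_
    rw [card_image_of_injective _ hinj, card_univ, Fintype.card_fin, hE.1 e he]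
  simpa [← h] using hx

theorem exists_third_vertex (hE : IsLinear 3 E) {v x : V} (hx : x ∈ neighbors E e v) :
    ∃ y, y ∈ neighbors E e v ∧ y ≠ x ∧ {v, x, y} ∈ otherEdges E e v := by
  obtain ⟨f, hf, hxv, hxf⟩ := mem_neighbors.1 hx
  have hf' := mem_otherEdges.1 hf
  have hxf' : x ∈ f.erase v := mem_erase.2 ⟨hxv, hxf⟩
  have hcard : ((f.erase v).erase x).card = 1 := by
    rw [card_erase_of_mem hxf', card_erase_of_mem hf'.2.2, hE.1 f hf'.2.1]
  obtain ⟨y, hy⟩ := card_eq_one.1 hcard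
  have hyf : y ∈ (f.erase v).erase x := by simp [hy]
  rw [mem_erase, mem_erase] at hyf
  refine ⟨y, mem_neighbors.2 ⟨f, hf, hyf.2⟩, hyf.1, ?_⟩
  rwa [← hy, insert_erase hxf', insert_erase hf'.2.2]

section ThreeUniform

variable {u : Fin 3 → V} (hE : IsLinear 3 E) (hfree : ¬ HasCrown 3 E) (he : e ∈ E)
  (hinj : Function.Injective u) (hmem : ∀ i, u i ∈ e)

include hE hfree he hinj hmem

/-- Two edges through `x` and `y`, which lie on a common edge through the vertex `u l` of large
degree, and through the other two vertices of `e` have the same third vertex. -/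
theorem third_vertex_unique {i k l : Fin 3} (hik : i ≠ k) (hil : i ≠ l) (hkl : k ≠ l)
    (hl : 4 ≤ (otherEdges E e (u l)).card) {x y z w : V}
    (h₁ : {u l, x, y} ∈ otherEdges E e (u l)) (h₂ : {u i, y, z} ∈ otherEdges E e (u i))
    (h₃ : {u k, x, w} ∈ otherEdges E e (u k)) : z = w := by
  have h₁' := mem_otherEdges.1 h₁
  have h₂' := mem_otherEdges.1 h₂
  have h₃' := mem_otherEdges.1 h₃
  have hne : ∀ s t, s ≠ t → ∀ f ∈ otherEdges E e (u s), u t ∉ f := fun s t hst f hf hc =>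
    hst (hinj (mem_unique hE he (hmem s) (hmem t) hf hc)).symm
  have hxy : x ≠ y := by
    rintro rfl
    have h1 := hE.1 _ h₁'.2.1
    have h2 := card_le_two (a := u l) (b := x)
    rw [pair_eq_singleton] at h1
    omega
  by_contra hzw
  have hd : Disjoint ({u i, y, z} : Finset V) {u k, x, w} := by
    have hyw : y ≠ w := by
      rintro rfl
      have := eq_of_two_mem hE h₁'.2.1 h₃'.2.1 hxy (by simp) (by simp) (by simp) (by simp)
      exact hne k l hkl _ h₃ (this ▸ h₁'.2.2)
    have hzx : z ≠ x := by
      rintro rfl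
      have := eq_of_two_mem hE h₁'.2.1 h₂'.2.1 hxy (by simp) (by simp) (by simp) (by simp)
      exact hne i l hil _ h₂ (this ▸ h₁'.2.2)
    have h1 := hne k i hik.symm _ h₃
    have h2 := hne i k hik _ h₂
    simp only [mem_insert, mem_singleton, not_or] at h1 h2
    simp only [disjoint_left, mem_insert, mem_singleton, not_or]
    rintro v (rfl | rfl | rfl)
    · exact h1
    · exact ⟨Ne.symm h2.2.1, hxy.symm, hyw⟩
    · exact ⟨Ne.symm h2.2.2, hzx, hzw⟩
  have hcases : ∀ t, t ≠ l → t ≠ i → t = k := by omega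
  have hki : k ≠ i := hik.symm
  have key := (matching_hits hE hfree he hinj hmem (l := l) hl
    (f := fun t => if t = i then {u i, y, z} else {u k, x, w}) (by
      intro t ht
      by_cases hti : t = i
      · subst hti; simpa using h₂
      · rw [hcases t ht hti]; simpa [hki] using h₃) (by
      intro s t hs ht hst
      by_cases hsi : s = i
      · simpa [hsi, show t ≠ i from fun hc => hst (hsi.trans hc.symm)] using hd
      · have : t = i := by
          by_contra hti
          exact hst ((hcases s hs hsi).trans (hcases t ht hti).symm)
        simpa only [if_neg hsi, if_pos this] using hd.symm)).2.2 i k hil hkl hik _ h₁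
  simp only [if_true, if_neg hki] at key
  rcases key with h | h
  · exact not_disjoint_iff.2 ⟨y, by simp, by simp⟩ h
  · exact not_disjoint_iff.2 ⟨x, by simp, by simp⟩ h

/-- Every edge disjoint from `e` is disjoint from all edges meeting `e`. -/
theorem disjoint_neighbors (hd₀ : 4 ≤ (otherEdges E e (u 0)).card)
    (hd₁ : 4 ≤ (otherEdges E e (u 1)).card) (hd₂ : 4 ≤ (otherEdges E e (u 2)).card + 1)
    {g : Finset V} (hg : g ∈ E) (hge : Disjoint e g) :
    Disjoint (neighbors E e (u 0)) g := by
  have hd : ∀ i, (3 - 1) ^ 2 ≤ (otherEdges E e (u i)).card + 1 := by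
    intro i; fin_cases i <;> simp <;> omega
  have hW : neighbors E e (u 1) = neighbors E e (u 0) :=
    (neighbors_subset hE hfree he hinj hmem le_rfl hd hd₀ 1).antisymm
      (neighbors_subset hE hfree he hinj hmem le_rfl hd hd₁ 0)
  have hnot : ∀ i, u i ∉ neighbors E e (u 0) := by
    intro i hi
    obtain ⟨f, hf, hne, hif⟩ := mem_neighbors.1 hi
    exact hne (mem_unique hE he (hmem 0) (hmem i) hf hif)
  have hα := fun x (hx : x ∈ neighbors E e (u 0)) => exists_third_vertex hE hx
  have hβ := fun x (hx : x ∈ neighbors E e (u 1)) => exists_third_vertex hE hx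
  have hγ := fun x (hx : x ∈ neighbors E e (u 2)) => exists_third_vertex hE hx
  choose! α hα using hα
  choose! β hβ using hβ
  choose! γ hγ using hγ
  rw [hW] at hβ
  have hug : ∀ i, u i ∉ g := fun i => disjoint_left.1 hge (hmem i)
  rw [disjoint_left]
  intro x₀ hx₀ hx₀g
  refine false_of_matchings hE hfree (hinj.ne (show (0 : Fin 3) ≠ 1 by decide))
    (hinj.ne (show (0 : Fin 3) ≠ 2 by decide)) (hinj.ne (show (1 : Fin 3) ≠ 2 by decide))
    (hnot 0) (hnot 1) (hnot 2) ?_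
    (card_sdiff_neighbors_le hE hfree he hinj hmem le_rfl hd hd₀ 2)
    (fun x hx => ⟨(hα x hx).1, (hα x hx).2.1, (mem_otherEdges.1 (hα x hx).2.2).2.1⟩)
    (fun x hx => ⟨(hβ x hx).1, (hβ x hx).2.1, (mem_otherEdges.1 (hβ x hx).2.2).2.1⟩)
    ?_ hg (hug 0) (hug 1) (hug 2) hx₀ hx₀g
  · rw [card_neighbors hE, card_otherEdges_eq hE hfree he hinj hmem le_rfl hd hd₀]
    rfl
  · intro x hx hxc
    have h1 := third_vertex_unique hE hfree he hinj hmem (i := 0) (k := 2) (l := 1)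
      (by decide) (by decide) (by decide) hd₁ (hβ x hx).2.2 (hα _ (hβ x hx).1).2.2
      (hγ x hxc).2.2
    have h2 := third_vertex_unique hE hfree he hinj hmem (i := 1) (k := 2) (l := 0)
      (by decide) (by decide) (by decide) hd₀ (hα x hx).2.2 (hβ _ (hα x hx).1).2.2
      (hγ x hxc).2.2
    rw [h1, h2]
    exact ⟨(mem_otherEdges.1 (hγ x hxc).2.2).2.1, rfl⟩

theorem card_otherEdges_le (hd₀ : 4 ≤ (otherEdges E e (u 0)).card)
    (hd₁ : 4 ≤ (otherEdges E e (u 1)).card) (hd₂ : 4 ≤ (otherEdges E e (u 2)).card + 1)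
    (i : Fin 3) : (otherEdges E e (u i)).card ≤ 4 := by
  have hd : ∀ i, (3 - 1) ^ 2 ≤ (otherEdges E e (u i)).card + 1 := by
    intro i; fin_cases i <;> simp <;> omega
  have h := card_le_card (neighbors_subset hE hfree he hinj hmem le_rfl hd hd₀ i)
  rw [card_neighbors hE, card_neighbors hE,
    card_otherEdges_eq hE hfree he hinj hmem le_rfl hd hd₀] at h
  omega

theorem biUnion_meeting_eq (hd₀ : 4 ≤ (otherEdges E e (u 0)).card)
    (hd₁ : 4 ≤ (otherEdges E e (u 1)).card) (hd₂ : 4 ≤ (otherEdges E e (u 2)).card + 1) :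
    (E.filter (fun f => (f ∩ e).Nonempty)).biUnion id = e ∪ neighbors E e (u 0) := by
  have hd : ∀ i, (3 - 1) ^ 2 ≤ (otherEdges E e (u i)).card + 1 := by
    intro i; fin_cases i <;> simp <;> omega
  ext x
  simp only [mem_biUnion, mem_filter, id, mem_union]
  constructor
  · rintro ⟨f, ⟨hf, y, hy⟩, hxf⟩
    obtain ⟨hyf, hye⟩ := mem_inter.1 hy
    by_cases hfe : f = e
    · exact Or.inl (hfe ▸ hxf)
    obtain ⟨i, rfl⟩ := exists_eq_of_mem hE he hinj hmem hye
    by_cases hxi : x = u i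
    · exact Or.inl (hxi ▸ hye)
    · exact Or.inr (neighbors_subset hE hfree he hinj hmem le_rfl hd hd₀ i
        (mem_neighbors.2 ⟨f, mem_otherEdges.2 ⟨hfe, hf, hyf⟩, hxi, hxf⟩))
  · rintro (hx | hx)
    · exact ⟨e, ⟨he, x, by simp [hx]⟩, hx⟩
    · obtain ⟨f, hf, _, hxf⟩ := mem_neighbors.1 hx
      have hf' := mem_otherEdges.1 hf
      exact ⟨f, ⟨hf'.2.1, u 0, mem_inter.2 ⟨hf'.2.2, hmem 0⟩⟩, hxf⟩

theorem exists_mem_of_meets (hd₀ : 4 ≤ (otherEdges E e (u 0)).card)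
    (hd₁ : 4 ≤ (otherEdges E e (u 1)).card) (hd₂ : 4 ≤ (otherEdges E e (u 2)).card + 1)
    {f : Finset V} (hf : f ∈ E) {x : V} (hx : x ∈ e ∪ neighbors E e (u 0)) (hxf : x ∈ f) :
    ∃ i, u i ∈ f := by
  by_contra! hcon
  have hdis : Disjoint e f := by
    rw [disjoint_left]
    intro y hy
    obtain ⟨i, rfl⟩ := exists_eq_of_mem hE he hinj hmem hy
    exact hcon i
  rcases mem_union.1 hx with hx | hx
  · exact disjoint_left.1 hdis hx hxf
  · exact disjoint_left.1 (disjoint_neighbors hE hfree he hinj hmem hd₀ hd₁ hd₂ hf hdis) hx hxf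

theorem key_lemma_three (hd₀ : 4 ≤ (otherEdges E e (u 0)).card)
    (hd₁ : 4 ≤ (otherEdges E e (u 1)).card) (hd₂ : 4 ≤ (otherEdges E e (u 2)).card + 1)
    {S : Finset V} (hS : S = (E.filter (fun f => (f ∩ e).Nonempty)).biUnion id) :
    S.card = 11 ∧ (∀ v ∈ S, degree E v ≤ 5) ∧
      (E.filter (fun f => (f ∩ S).Nonempty)).card ≤ 13 := by
  rw [biUnion_meeting_eq hE hfree he hinj hmem hd₀ hd₁ hd₂] at hS
  have hle := card_otherEdges_le hE hfree he hinj hmem hd₀ hd₁ hd₂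
  have hmeet := @exists_mem_of_meets V _ E e u hE hfree he hinj hmem hd₀ hd₁ hd₂
  rw [← hS] at hmeet
  have hdisj : Disjoint e (neighbors E e (u 0)) := by
    rw [disjoint_left]
    intro x hx hxN
    obtain ⟨f, hf, hne, hxf⟩ := mem_neighbors.1 hxN
    exact hne (mem_unique hE he (hmem 0) hx hf hxf)
  refine ⟨?_, ?_, ?_⟩
  · rw [hS, card_union_of_disjoint hdisj, hE.1 e he, card_neighbors hE]
    have := hle 0
    omega
  · intro v hv
    by_cases hve : v ∈ e
    · obtain ⟨i, rfl⟩ := exists_eq_of_mem hE he hinj hmem hve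
      rw [← card_otherEdges he hve]
      exact Nat.add_le_add_right (hle i) 1
    · have h3 : degree E v ≤ (univ : Finset (Fin 3)).card := by
        refine card_le_card_of_forall_subsingleton (fun f i => u i ∈ f) ?_ ?_
        · intro f hf
          rw [mem_filter] at hf
          obtain ⟨i, hi⟩ := hmeet hf.1 hv hf.2
          exact ⟨i, mem_univ i, hi⟩
        · rintro i - f ⟨hf, hif⟩ g ⟨hg, hig⟩
          rw [mem_filter] at hf hg
          exact eq_of_two_mem hE hf.1 hg.1 (ne_of_mem_of_not_mem (hmem i) hve) hif hf.2 hig hg.2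
      rw [card_univ, Fintype.card_fin] at h3
      omega
  · have hsub : E.filter (fun f => (f ∩ S).Nonempty) ⊆
        insert e (univ.biUnion fun i => otherEdges E e (u i)) := by
      intro f hf
      obtain ⟨hfE, x, hx⟩ := mem_filter.1 hf
      obtain ⟨hxf, hxS⟩ := mem_inter.1 hx
      obtain ⟨i, hi⟩ := hmeet hfE hxS hxf
      by_cases hfe : f = e
      · simp [hfe]
      · exact mem_insert_of_mem (mem_biUnion.2 ⟨i, mem_univ i, mem_otherEdges.2 ⟨hfe, hfE, hi⟩⟩)
    refine (card_le_card hsub).trans ((card_insert_le _ _).trans ?_)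
    have := card_biUnion_le_card_mul univ (fun i => otherEdges E e (u i)) 4 fun i _ => hle i
    rw [card_univ, Fintype.card_fin] at this
    omega

end ThreeUniform

end LinearHypergraph

/-- Key lemma: for an edge `e` with `D(e) ≥ {(r-1)^2+1, (r-1)^2+1, (r-1)^2, …}` in a
`{C_{1r}, C*}`-free linear `r`-graph, the union `S` of all edges meeting `e` has exactly
`(r-1)^3 + r` vertices, all of degree at most `(r-1)^2 + 1`, and at most
`r(r-1)^2 + 1` edges intersect `S`. -/
theorem key_lemma {V : Type*} [DecidableEq V] [Fintype V]
    (r : ℕ) (hr : 3 ≤ r) (E : Finset (Finset V)) (hlin : IsLinear r E)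
    (hfree₁ : ¬ HasCrown r E) (hfree₂ : ¬ HasCStar r E)
    (e : Finset V) (he : e ∈ E) (u : Fin r → V)
    (hinj : Function.Injective u) (hmem : ∀ i, u i ∈ e)
    (hd1 : (r - 1) ^ 2 + 1 ≤ degree E (u ⟨0, by omega⟩))
    (hd2 : (r - 1) ^ 2 + 1 ≤ degree E (u ⟨1, by omega⟩))
    (hdi : ∀ i : Fin r, 2 ≤ (i : ℕ) → (r - 1) ^ 2 ≤ degree E (u i))
    (S : Finset V) (hS : S = (E.filter (fun f => (f ∩ e).Nonempty)).biUnion id) :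
    S.card = (r - 1) ^ 3 + r ∧
    (∀ v ∈ S, degree E v ≤ (r - 1) ^ 2 + 1) ∧
    (E.filter (fun f => (f ∩ S).Nonempty)).card ≤ r * (r - 1) ^ 2 + 1 := by
  have hcard := fun i => LinearHypergraph.card_otherEdges he (hmem i)
  have hd : ∀ i, (r - 1) ^ 2 ≤ (LinearHypergraph.otherEdges E e (u i)).card + 1 := by
    intro i
    rw [hcard]
    by_cases hi0 : (i : ℕ) = 0
    · rw [show i = ⟨0, by omega⟩ from Fin.ext hi0]; omega
    by_cases hi1 : (i : ℕ) = 1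
    · rw [show i = ⟨1, by omega⟩ from Fin.ext hi1]; omega
    exact hdi i (by omega)
  rw [← hcard, add_le_add_iff_right] at hd1 hd2
  rcases hr.lt_or_eq with hr4 | rfl
  · exact absurd (LinearHypergraph.hasCStar_of_four_le hlin hfree₁ he hinj hmem hr4 hd hd1 hd2)
      hfree₂
  · exact LinearHypergraph.key_lemma_three hlin hfree₁ he hinj hmem hd1 hd2 (hd 2) hS
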